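/- For an arbitrary prime power q and integer r ≥ 2, the graph G(q^{r−1}, 1+q+⋯+q^{r−2}) is K_{r,(r−1)!+1}-free; concretely, any r pairwise distinct vertices of this graph have at most (r−1)! common neighbors. -/

import Mathlib

/-- The scaling relation by the subgroup `H ≤ Fˣ` on nonzero pairs of field elements:
`(a₁,b₁) ∼ (a₂,b₂)` iff there is `h ∈ H` with `a₁ = h·a₂` and `b₁ = h·b₂`. -/
def Grel {F : Type} [Field F] (H : Subgroup Fˣ) (p p' : {p : F × F // p ≠ 0}) : Prop :=
  ∃ h ∈ H, p.1.1 = (h : F) * p'.1.1 ∧ p.1.2 = (h : F) * p'.1.2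

/-- The vertex set of the graph `G(q,t)`: nonzero pairs modulo scaling by `H`. -/
def GVertex (F : Type) [Field F] (H : Subgroup Fˣ) : Type :=
  Quot (Grel H)

/-- Membership of a field element in the subgroup `H ≤ Fˣ`. -/
def memH {F : Type} [Field F] (H : Subgroup Fˣ) (x : F) : Prop :=
  ∃ h ∈ H, (h : F) = x

/-- Adjacency in the graph `G(q,t)`: `⟨a,b⟩` and `⟨x,y⟩` are adjacent iff `a·x + b·y ∈ H`
(this condition is independent of the chosen representatives). -/
def GAdj {F : Type} [Field F] (H : Subgroup Fˣ) (u v : GVertex F H) : Prop :=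
  ∃ p p' : {p : F × F // p ≠ 0},
    u = Quot.mk (Grel H) p ∧ v = Quot.mk (Grel H) p' ∧
      memH H (p.1.1 * p'.1.1 + p.1.2 * p'.1.2)

/-!
Fix representatives `p i` of the `r = n + 2` given vertices. If `[s]` is adjacent to all of them,
then every `s · p i` lies in `H`. The ratio `T = (s · p 1) / (s · p 0)` determines `[s]`, and
Cramer's rule gives `T - c i = b i * ((s · p i) / (s · p 0)) ∈ b i * H` for each `i ≠ 0`, with
constants `c i`, `b i` and with distinct `c i`. The norm `x ↦ ∏ j ≤ n, σ j x`, `σ j x = x ^ q ^ j`,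
is trivial on `H`, so `x j = σ j T` solves the `n + 1` equations
`∏ j ≤ n, (x j - σ j (c i)) = ∏ j ≤ n, σ j (b i)`.

To bound the number of values of `x n` on the solutions of such a system, let `W` be the space of
functions on the solution set spanned by the monomials of degree at most `j + 1` in each `x j`,
`j < n`. Lagrange interpolation in one coordinate at a time writes every element of `W` as a
combination of the products `∏ j < n, (x j - a i j)` with coefficients of degree at most `j` in
each `x j`. The `i`-th equation says that multiplication by `x n` sends `∏ j < n, (x j - a i j)`
to a combination of itself and `1`, so `W` is stable under `x n`. Hence `x n` satisfies a
polynomial equation of degree at most `dim W ≤ (n + 1)!`.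
-/

section PolynomialSystem

open Polynomial Submodule
open scoped Nat

section DegreeBounds

variable {R A : Type*} [CommRing R] [CommRing A] [Algebra R A]

/-- The space of polynomial expressions in `x` over `R` of degree at most `d`. -/
noncomputable def aevalDegreeLE (R : Type*) [CommRing R] [Algebra R A] (d : ℕ) (x : A) :
    Submodule R A :=
  (degreeLE R d).map (aeval x).toLinearMap

/-- The space of polynomial expressions in `x 0, …, x (n - 1)` over `R` whose degree in each `x j`
is at most `d j`. -/
noncomputable def aevalBoxDegreeLE (R : Type*) [CommRing R] [Algebra R A] (d : ℕ → ℕ) (x : ℕ → A)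
    (n : ℕ) : Submodule R A :=
  ∏ j ∈ Finset.range n, aevalDegreeLE R (d j) (x j)

theorem aeval_mem_aevalDegreeLE {d : ℕ} {p : R[X]} (hp : p.degree ≤ d) (x : A) :
    aeval x p ∈ aevalDegreeLE R d x :=
  ⟨p, mem_degreeLE.2 hp, rfl⟩

theorem aevalDegreeLE_mono {d e : ℕ} (h : d ≤ e) (x : A) :
    aevalDegreeLE R d x ≤ aevalDegreeLE R e x :=
  map_mono (degreeLE_mono (by exact_mod_cast h))

theorem one_mem_aevalDegreeLE (d : ℕ) (x : A) : 1 ∈ aevalDegreeLE R d x := by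
  simpa using aeval_mem_aevalDegreeLE (R := R) (p := 1) (d := d)
    (degree_one_le.trans (by exact_mod_cast d.zero_le)) x

theorem aevalDegreeLE_mul_span_sub_le (d : ℕ) (x : A) (c : R) :
    aevalDegreeLE R d x * span R {x - algebraMap R A c} ≤ aevalDegreeLE R (d + 1) x := by
  rw [mul_le]
  rintro _ ⟨p, hp, rfl⟩ _ hy
  obtain ⟨k, rfl⟩ := mem_span_singleton.1 hy
  have hdeg : (p * (k • (X - C c))).degree ≤ ((d + 1 : ℕ) : WithBot ℕ) := by
    push_cast
    exact degree_mul_le_of_le (mem_degreeLE.1 hp)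
      ((degree_smul_le _ _).trans (degree_X_sub_C_le c))
  simpa using aeval_mem_aevalDegreeLE hdeg x

theorem aevalDegreeLE_eq_span [DecidableEq A] (d : ℕ) (x : A) :
    aevalDegreeLE R d x = span R ↑((Finset.range (d + 1)).image (x ^ ·)) := by
  classical
  rw [aevalDegreeLE, degreeLE_eq_span_X_pow, map_span]
  simp [Set.image_image]

theorem one_mem_aevalBoxDegreeLE (d : ℕ → ℕ) (x : ℕ → A) (n : ℕ) :
    1 ∈ aevalBoxDegreeLE R d x n :=
  one_le.1 <| Finset.one_le_prod' fun j _ ↦ one_le.2 (one_mem_aevalDegreeLE (d j) (x j))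

theorem aevalBoxDegreeLE_mono {d e : ℕ → ℕ} (h : d ≤ e) (x : ℕ → A) (n : ℕ) :
    aevalBoxDegreeLE R d x n ≤ aevalBoxDegreeLE R e x n :=
  Finset.prod_le_prod' fun j _ ↦ aevalDegreeLE_mono (h j) (x j)

theorem aevalBoxDegreeLE_mul_span_prod_sub_le (d : ℕ → ℕ) (x : ℕ → A) (c : ℕ → R) (n : ℕ) :
    aevalBoxDegreeLE R d x n * span R {∏ j ∈ Finset.range n, (x j - algebraMap R A (c j))} ≤
      aevalBoxDegreeLE R (fun j ↦ d j + 1) x n := by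
  rw [← prod_span_singleton, aevalBoxDegreeLE, ← Finset.prod_mul_distrib]
  exact Finset.prod_le_prod' fun j _ ↦ aevalDegreeLE_mul_span_sub_le (d j) (x j) (c j)

theorem exists_finset_span_eq_aevalBoxDegreeLE (d : ℕ → ℕ) (x : ℕ → A) (n : ℕ) :
    ∃ s : Finset A, s.card ≤ ∏ j ∈ Finset.range n, (d j + 1) ∧
      span R s = aevalBoxDegreeLE R d x n := by
  classical
  open scoped Pointwise in
  refine ⟨∏ j ∈ Finset.range n, (Finset.range (d j + 1)).image (x j ^ ·), ?_, ?_⟩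
  · refine (Finset.le_prod_of_submultiplicative _ Finset.card_one.le
      (fun _ _ ↦ Finset.card_mul_le) _ _).trans (Finset.prod_le_prod' fun j _ ↦ ?_)
    simpa using Finset.card_image_le (s := Finset.range (d j + 1)) (f := (x j ^ ·))
  · rw [Finset.coe_prod, ← prod_span]
    simp only [aevalBoxDegreeLE, aevalDegreeLE_eq_span]

instance finite_aevalBoxDegreeLE (d : ℕ → ℕ) (x : ℕ → A) (n : ℕ) :
    Module.Finite R (aevalBoxDegreeLE R d x n) := by
  obtain ⟨s, -, hs⟩ := exists_finset_span_eq_aevalBoxDegreeLE (R := R) d x n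
  exact hs ▸ inferInstance

theorem finrank_aevalBoxDegreeLE_le [StrongRankCondition R] (d : ℕ → ℕ) (x : ℕ → A) (n : ℕ) :
    Module.finrank R (aevalBoxDegreeLE R d x n) ≤ ∏ j ∈ Finset.range n, (d j + 1) := by
  obtain ⟨s, hcard, hs⟩ := exists_finset_span_eq_aevalBoxDegreeLE (R := R) d x n
  exact hs ▸ (finrank_span_finset_le_card s).trans hcard

end DegreeBounds

variable {F A ι : Type*} [Field F] [CommRing A] [Algebra F A]

theorem exists_lagrange_basis_eq_mul_X_sub_C [DecidableEq ι] {I : Finset ι} {v : ι → F}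
    (hv : Set.InjOn v I) {d : ℕ} (hI : I.card = d + 2) {i k : ι} (hi : i ∈ I) (hk : k ∈ I)
    (hik : i ≠ k) :
    ∃ p : F[X], p.degree ≤ d ∧ Lagrange.basis I v k = p * (X - C (v i)) := by
  obtain ⟨p, hp⟩ := dvd_iff_isRoot.2 (Lagrange.eval_basis_of_ne (v := v) hik.symm hi)
  refine ⟨p, ?_, by rw [hp, mul_comm]⟩
  have hdeg := Lagrange.degree_basis hv hk
  have hp0 : p ≠ 0 := by
    rintro rfl
    exact Lagrange.basis_ne_zero hv hk (by simpa using hp)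
  rw [hp, degree_mul, degree_X_sub_C, hI, degree_eq_natDegree hp0] at hdeg
  rw [degree_eq_natDegree hp0]
  norm_cast at hdeg ⊢
  omega

theorem aevalDegreeLE_le_iSup_span_lagrange_basis [DecidableEq ι] {I : Finset ι} {v : ι → F}
    (hv : Set.InjOn v I) {d : ℕ} (hI : I.card = d + 1) (x : A) :
    aevalDegreeLE F d x ≤ ⨆ k ∈ I, span F {aeval x (Lagrange.basis I v k)} := by
  rintro _ ⟨p, hp, rfl⟩
  have hdeg : p.degree < I.card := by
    rw [hI]
    exact (mem_degreeLE.1 hp).trans_lt (by exact_mod_cast d.lt_succ_self)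
  rw [Lagrange.eq_interpolate hv hdeg, Lagrange.interpolate_apply, AlgHom.toLinearMap_apply,
    map_sum]
  refine sum_mem fun k hk ↦ mem_iSup_of_mem k (mem_iSup_of_mem hk ?_)
  rw [← smul_eq_C_mul, map_smul]
  exact smul_mem _ _ (mem_span_singleton_self _)

theorem aevalBoxDegreeLE_succ_le_iSup (x : ℕ → A) (a : ι → ℕ → F) (n : ℕ)
    (I : Finset ι) (hI : I.card = n + 1) (ha : ∀ j < n, Set.InjOn (a · j) I) :
    aevalBoxDegreeLE F (fun j ↦ j + 1) x n ≤ ⨆ i ∈ I, aevalBoxDegreeLE F (fun j ↦ j) x n *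
      span F {∏ j ∈ Finset.range n, (x j - algebraMap F A (a i j))} := by
  classical
  induction n generalizing I with
  | zero =>
    obtain ⟨i, rfl⟩ := Finset.card_eq_one.1 hI
    simp [aevalBoxDegreeLE, ← one_eq_span]
  | succ n ih =>
    have hlast : aevalDegreeLE F (n + 1) (x n) ≤
        ⨆ k ∈ I, span F {aeval (x n) (Lagrange.basis I (a · n) k)} :=
      aevalDegreeLE_le_iSup_span_lagrange_basis (ha n n.lt_succ_self) hI (x n)
    rw [aevalBoxDegreeLE, Finset.prod_range_succ]
    refine (mul_le_mul_right hlast _).trans ?_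
    simp_rw [mul_iSup]
    refine iSup₂_le fun k hk ↦ ?_
    have hrest := ih (I.erase k) (by simp [Finset.card_erase_of_mem hk, hI])
      fun j hj ↦ (ha j (by omega)).mono (by simp)
    refine (mul_le_mul_left hrest _).trans ?_
    simp_rw [iSup_mul]
    refine iSup₂_le fun i hi ↦ ?_
    obtain ⟨hik, hi⟩ := Finset.mem_erase.1 hi
    obtain ⟨p, hp, hbasis⟩ :=
      exists_lagrange_basis_eq_mul_X_sub_C (ha n n.lt_succ_self) hI hi hk hik
    have hspan : span F {aeval (x n) (Lagrange.basis I (a · n) k)} ≤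
        aevalDegreeLE F n (x n) * span F {x n - algebraMap F A (a i n)} := by
      rw [span_singleton_le_iff_mem, hbasis, map_mul, aeval_sub, aeval_X, aeval_C]
      exact mul_mem_mul (aeval_mem_aevalDegreeLE hp _) (mem_span_singleton_self _)
    refine le_iSup₂_of_le i hi ((mul_le_mul_right hspan _).trans_eq ?_)
    rw [mul_mul_mul_comm, ← prod_span_singleton, ← prod_span_singleton, aevalBoxDegreeLE,
      aevalBoxDegreeLE, Finset.prod_range_succ, Finset.prod_range_succ]

theorem mul_mem_aevalBoxDegreeLE_of_prod_sub_eq {x : ℕ → A} {a : ι → ℕ → F}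
    {b : ι → F} {n : ℕ} {I : Finset ι} (hI : I.card = n + 1)
    (ha : ∀ j < n, Set.InjOn (a · j) I)
    (hx : ∀ i ∈ I, ∏ j ∈ Finset.range (n + 1), (x j - algebraMap F A (a i j)) =
      algebraMap F A (b i)) {w : A} (hw : w ∈ aevalBoxDegreeLE F (fun j ↦ j + 1) x n) :
    x n * w ∈ aevalBoxDegreeLE F (fun j ↦ j + 1) x n := by
  suffices h : span F {x n} * aevalBoxDegreeLE F (fun j ↦ j + 1) x n ≤
      aevalBoxDegreeLE F (fun j ↦ j + 1) x n from
    h (mul_mem_mul (mem_span_singleton_self _) hw)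
  refine (mul_le_mul_right (aevalBoxDegreeLE_succ_le_iSup x a n I hI ha) _).trans ?_
  simp_rw [mul_iSup]
  refine iSup₂_le fun i hi ↦ ?_
  have hprod : x n * ∏ j ∈ Finset.range n, (x j - algebraMap F A (a i j)) =
      b i • 1 + a i n • ∏ j ∈ Finset.range n, (x j - algebraMap F A (a i j)) := by
    rw [Algebra.smul_def, ← hx i hi, Finset.prod_range_succ, Algebra.smul_def]
    ring
  rw [mul_left_comm, span_mul_span, Set.singleton_mul_singleton, mul_le]
  intro g hg _ hz
  obtain ⟨k, rfl⟩ := mem_span_singleton.1 hz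
  rw [hprod, mul_smul_comm, mul_add, mul_smul_comm, mul_smul_comm, mul_one]
  exact smul_mem _ _ <| add_mem
    (smul_mem _ _ (aevalBoxDegreeLE_mono (fun j ↦ j.le_succ) x n hg))
    (smul_mem _ _ (aevalBoxDegreeLE_mul_span_prod_sub_le _ x (a i) n
      (mul_mem_mul hg (mem_span_singleton_self _))))

theorem isIntegral_and_natDegree_minpoly_le_finrank {t : A} {W : Submodule F A}
    [FiniteDimensional F W] (h1 : 1 ∈ W) (ht : ∀ w ∈ W, t * w ∈ W) :
    IsIntegral F t ∧ (minpoly F t).natDegree ≤ Module.finrank F W := by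
  have hpow (k : ℕ) : t ^ k ∈ W := by
    induction k with
    | zero => simpa using h1
    | succ k ih => simpa only [pow_succ'] using ht _ ih
  have hle : Subalgebra.toSubmodule (Algebra.adjoin F {t}) ≤ W := by
    rw [Algebra.adjoin_eq_span, span_le]
    intro y hy
    obtain ⟨k, rfl⟩ := Submonoid.mem_closure_singleton.1 hy
    exact hpow k
  have hfin : FiniteDimensional F (Subalgebra.toSubmodule (Algebra.adjoin F {t})) :=
    finiteDimensional_of_le hle
  have hint : IsIntegral F t :=
    .of_mem_of_fg _ (fg_iff_finiteDimensional _ |>.2 hfin) t (Algebra.self_mem_adjoin_singleton F t)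
  refine ⟨hint, ?_⟩
  rw [← Algebra.adjoin.powerBasis_dim hint, ← PowerBasis.finrank]
  exact finrank_mono hle

theorem isIntegral_and_natDegree_minpoly_le_factorial {x : ℕ → A}
    {a : ι → ℕ → F} {b : ι → F} {n : ℕ} {I : Finset ι} (hI : I.card = n + 1)
    (ha : ∀ j < n, Set.InjOn (a · j) I)
    (hx : ∀ i ∈ I, ∏ j ∈ Finset.range (n + 1), (x j - algebraMap F A (a i j)) =
      algebraMap F A (b i)) :
    IsIntegral F (x n) ∧ (minpoly F (x n)).natDegree ≤ (n + 1)! := by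
  obtain ⟨hint, hdeg⟩ := isIntegral_and_natDegree_minpoly_le_finrank
    (one_mem_aevalBoxDegreeLE _ x n) fun _ ↦ mul_mem_aevalBoxDegreeLE_of_prod_sub_eq hI ha hx
  refine ⟨hint, hdeg.trans ((finrank_aevalBoxDegreeLE_le _ x n).trans_eq ?_)⟩
  rw [← Finset.prod_range_add_one_eq_factorial, Finset.prod_range_succ']
  simp

theorem encard_image_solutions_prod_sub_eq_le_factorial (n : ℕ) {a : ι → ℕ → F}
    (b : ι → F) {I : Finset ι} (hI : I.card = n + 1) (ha : ∀ j < n, Set.InjOn (a · j) I) :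
    ((fun x ↦ x n) '' {x : ℕ → F | ∀ i ∈ I, ∏ j ∈ Finset.range (n + 1), (x j - a i j) = b i}).encard
      ≤ (n + 1)! := by
  set S := {x : ℕ → F | ∀ i ∈ I, ∏ j ∈ Finset.range (n + 1), (x j - a i j) = b i}
  let coord (j : ℕ) (x : S) : F := x.1 j
  have hcoord (i) (hi : i ∈ I) : ∏ j ∈ Finset.range (n + 1),
      (coord j - algebraMap F (S → F) (a i j)) = algebraMap F (S → F) (b i) := by
    ext x
    simpa [coord] using x.2 i hi
  obtain ⟨hint, hdeg⟩ := isIntegral_and_natDegree_minpoly_le_factorial hI ha hcoord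
  have hsub : (fun x ↦ x n) '' S ⊆ (minpoly F (coord n)).rootSet F := by
    rintro _ ⟨x, hx, rfl⟩
    refine (mem_rootSet_of_ne (minpoly.ne_zero hint)).2 ?_
    have := congrFun (minpoly.aeval F (coord n)) ⟨x, hx⟩
    rwa [aeval_fn_apply] at this
  grw [Set.encard_le_encard hsub, ← (rootSet_finite _ F).cast_ncard_eq, ncard_rootSet_le, hdeg]

end PolynomialSystem

section PowerNorm

theorem exists_ringHom_eq_pow_pow {q m : ℕ} (hq : IsPrimePow q) {R : Type*} [CommRing R]
    [IsDomain R] [Fintype R] (hR : Fintype.card R = q ^ m) :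
    ∃ σ : ℕ → R →+* R, ∀ j x, σ j x = x ^ q ^ j := by
  obtain ⟨p, k, hp, -, rfl⟩ := (isPrimePow_nat_iff q).1 hq
  have : Fact p.Prime := ⟨hp⟩
  have : CharP R p := charP_of_card_eq_prime_pow (hR.trans (pow_mul p k m).symm)
  exact ⟨fun j ↦ iterateFrobenius R p (k * j), fun j x ↦ by rw [iterateFrobenius_def, pow_mul]⟩

theorem prod_pow_pow_eq_one_of_mem {M : Type*} [CommMonoid M] {H : Subgroup Mˣ} {q n : ℕ}
    (hH : Nat.card H = ∑ j ∈ Finset.range n, q ^ j) {h : Mˣ} (hh : h ∈ H) :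
    ∏ j ∈ Finset.range n, (h : M) ^ q ^ j = 1 := by
  rw [Finset.prod_pow_eq_pow_sum, ← hH, ← Units.val_pow_eq_pow_val,
    orderOf_dvd_iff_pow_eq_one.1 (H.orderOf_dvd_natCard hh), Units.val_one]

end PowerNorm

section Graph

open scoped Nat

section Pairs

variable {R : Type*} [CommRing R]

/-- The bilinear form `⟨u, v⟩ = u₁v₁ + u₂v₂` defining adjacency in the graph. -/
def pairDot (u v : R × R) : R := u.1 * v.1 + u.2 * v.2

/-- The determinant of the `2 × 2` matrix with rows `u` and `v`. -/
def pairDet (u v : R × R) : R := u.1 * v.2 - u.2 * v.1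

theorem pairDot_comm (u v : R × R) : pairDot u v = pairDot v u := by
  simp only [pairDot]; ring

theorem pairDet_mul_pairDet (s s' p p' : R × R) :
    pairDet s s' * pairDet p p' =
      pairDot s p * pairDot s' p' - pairDot s p' * pairDot s' p := by
  simp only [pairDot, pairDet]; ring

theorem pairDet_mul_pairDot (u v w s : R × R) :
    pairDet u v * pairDot s w = pairDet u w * pairDot s v - pairDet v w * pairDot s u := by
  simp only [pairDot, pairDet]; ring

theorem pairDet_plucker (u v w z : R × R) :
    pairDet u v * pairDet w z = pairDet u w * pairDet v z - pairDet u z * pairDet v w := by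
  simp only [pairDet]; ring

end Pairs

variable {F : Type} [Field F] {H : Subgroup Fˣ}

theorem memH.ne_zero {x : F} (hx : memH H x) : x ≠ 0 := by
  obtain ⟨h, -, rfl⟩ := hx
  exact h.ne_zero

theorem memH.mul {x y : F} (hx : memH H x) (hy : memH H y) : memH H (x * y) := by
  obtain ⟨h, hh, rfl⟩ := hx
  obtain ⟨k, hk, rfl⟩ := hy
  exact ⟨h * k, mul_mem hh hk, by push_cast; rfl⟩

theorem memH.div {x y : F} (hx : memH H x) (hy : memH H y) : memH H (x / y) := by
  obtain ⟨h, hh, rfl⟩ := hx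
  obtain ⟨k, hk, rfl⟩ := hy
  exact ⟨h / k, div_mem hh hk, by push_cast; rfl⟩

theorem Grel_equivalence (H : Subgroup Fˣ) : Equivalence (Grel H) where
  refl p := ⟨1, one_mem _, by simp⟩
  symm := by
    rintro p p' ⟨h, hh, h1, h2⟩
    exact ⟨h⁻¹, inv_mem hh, by simp [h1], by simp [h2]⟩
  trans := by
    rintro p p' p'' ⟨h, hh, h1, h2⟩ ⟨k, hk, h3, h4⟩
    exact ⟨h * k, mul_mem hh hk, by simp [h1, h3, mul_assoc], by simp [h2, h4, mul_assoc]⟩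

theorem Grel_mk_eq_iff {p p' : {p : F × F // p ≠ 0}} :
    Quot.mk (Grel H) p = Quot.mk (Grel H) p' ↔ Grel H p p' :=
  (Grel_equivalence H).quot_mk_eq_iff p p'

theorem GAdj_mk_iff {p p' : {p : F × F // p ≠ 0}} :
    GAdj H (Quot.mk _ p) (Quot.mk _ p') ↔ memH H (pairDot p.1 p'.1) := by
  refine ⟨?_, fun h ↦ ⟨p, p', rfl, rfl, h⟩⟩
  rintro ⟨s, s', hs, hs', hss'⟩
  obtain ⟨h, hh, h1, h2⟩ := Grel_mk_eq_iff.1 hs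
  obtain ⟨k, hk, k1, k2⟩ := Grel_mk_eq_iff.1 hs'
  have hscale : pairDot p.1 p'.1 = h * k * (s.1.1 * s'.1.1 + s.1.2 * s'.1.2) := by
    rw [pairDot, h1, h2, k1, k2]
    ring
  exact hscale ▸ memH.mul (memH.mul ⟨h, hh, rfl⟩ ⟨k, hk, rfl⟩) hss'

theorem Grel_of_pairDet_eq_zero {s : F × F} {p p' : {p : F × F // p ≠ 0}}
    (hp : memH H (pairDot s p.1)) (hp' : memH H (pairDot s p'.1))
    (hdet : pairDet p.1 p'.1 = 0) : Grel H p p' := by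
  obtain ⟨h, hh, hratio⟩ := hp.div hp'
  have hne := hp'.ne_zero
  refine ⟨h, hh, ?_, ?_⟩ <;> rw [hratio, div_mul_eq_mul_div, eq_div_iff hne] <;>
    simp only [pairDot, pairDet] at hdet ⊢
  · linear_combination s.2 * hdet
  · linear_combination -s.1 * hdet

theorem encard_image_ratio_le_factorial {n : ℕ} (σ : ℕ → F →+* F)
    (hH : ∀ h ∈ H, ∏ j ∈ Finset.range (n + 1), σ j (h : F) = 1) {p : Fin (n + 2) → F × F}
    (hp : Pairwise fun i j ↦ pairDet (p i) (p j) ≠ 0) :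
    ((fun s ↦ pairDot s (p 1) / pairDot s (p 0)) ''
      {s : F × F | ∀ i, memH H (pairDot s (p i))}).encard ≤ (n + 1)! := by
  let c (i : Fin (n + 2)) : F := pairDet (p 1) (p i) / pairDet (p 0) (p i)
  let b (i : Fin (n + 2)) : F := pairDet (p 0) (p 1) / pairDet (p 0) (p i)
  have hc : Set.InjOn c (Finset.univ.erase 0 : Finset (Fin (n + 2))) := by
    intro i hi k hk hik
    have h0i := hp (Finset.ne_of_mem_erase hi).symm
    have h0k := hp (Finset.ne_of_mem_erase hk).symm
    by_contra hne
    refine mul_ne_zero (hp Fin.zero_ne_one) (hp hne) ?_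
    rw [pairDet_plucker, sub_eq_zero]
    linear_combination -(div_eq_div_iff h0i h0k).1 hik
  have hsolution (s : F × F) (hs : ∀ i, memH H (pairDot s (p i))) (i) (hi : i ≠ 0) :
      ∏ j ∈ Finset.range (n + 1),
        (σ j (pairDot s (p 1) / pairDot s (p 0)) - σ j (c i)) =
      ∏ j ∈ Finset.range (n + 1), σ j (b i) := by
    obtain ⟨h, hh, hratio⟩ := (hs i).div (hs 0)
    have hfactor : pairDot s (p 1) / pairDot s (p 0) - c i = b i * h := by
      have h0 := (hs 0).ne_zero
      have h0i := hp hi.symm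
      rw [hratio, div_sub_div _ _ h0 h0i, div_mul_div_comm, pairDet_mul_pairDot]
      ring
    simp_rw [← map_sub, hfactor, map_mul, Finset.prod_mul_distrib, hH h hh, mul_one]
  rw [← (σ n).injective.encard_image]
  refine (Set.encard_le_encard ?_).trans (encard_image_solutions_prod_sub_eq_le_factorial n
    (a := fun i j ↦ σ j (c i)) (fun i ↦ ∏ j ∈ Finset.range (n + 1), σ j (b i))
    (I := Finset.univ.erase 0) (by simp) fun j _ ↦ (σ j).injective.comp_injOn hc)
  rintro _ ⟨_, ⟨s, hs, rfl⟩, rfl⟩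
  exact ⟨fun j ↦ σ j (pairDot s (p 1) / pairDot s (p 0)),
    fun i hi ↦ hsolution s hs i (Finset.ne_of_mem_erase hi), rfl⟩

theorem Grel_of_ratio_eq {p p' s s' : {p : F × F // p ≠ 0}} (hdet : pairDet p.1 p'.1 ≠ 0)
    (hs : memH H (pairDot s.1 p.1)) (hs' : memH H (pairDot s'.1 p.1))
    (hratio : pairDot s.1 p'.1 / pairDot s.1 p.1 = pairDot s'.1 p'.1 / pairDot s'.1 p.1) :
    Grel H s s' := by
  have hcross := (div_eq_div_iff hs.ne_zero hs'.ne_zero).1 hratio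
  rw [pairDot_comm] at hs hs'
  refine Grel_of_pairDet_eq_zero hs hs' ((mul_eq_zero_iff_right hdet).1 ?_)
  rw [pairDet_mul_pairDet, sub_eq_zero]
  linear_combination -hcross

theorem G_Kr_free_general {n : ℕ} (σ : ℕ → F →+* F)
    (hH : ∀ h ∈ H, ∏ j ∈ Finset.range (n + 1), σ j (h : F) = 1)
    (v : Fin (n + 2) → GVertex F H) (hv : Function.Injective v) :
    {w : GVertex F H | ∀ i, GAdj H w (v i)}.encard ≤ (n + 1)! := by
  obtain ⟨p, rfl⟩ : ∃ p : Fin (n + 2) → {p : F × F // p ≠ 0}, v = fun i ↦ Quot.mk _ (p i) :=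
    ⟨fun i ↦ (v i).out, funext fun i ↦ (Quot.out_eq (v i)).symm⟩
  have hout (w : GVertex F H) (hw : ∀ i, GAdj H w (Quot.mk _ (p i))) (i) :
      memH H (pairDot w.out.1 (p i).1) :=
    GAdj_mk_iff.1 ((Quot.out_eq w).symm ▸ hw i)
  obtain hempty | ⟨w₀, hw₀⟩ := Set.eq_empty_or_nonempty {w | ∀ i, GAdj H w (Quot.mk _ (p i))}
  · simp [hempty]
  have hdet : Pairwise fun i j ↦ pairDet (p i).1 (p j).1 ≠ 0 := fun i j hij hzero ↦
    hij (hv (Quot.sound (Grel_of_pairDet_eq_zero (hout w₀ hw₀ i) (hout w₀ hw₀ j) hzero)))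
  refine le_trans (Set.encard_le_encard_of_injOn
    (f := fun w ↦ pairDot w.out.1 (p 1).1 / pairDot w.out.1 (p 0).1) ?_ ?_)
    (encard_image_ratio_le_factorial σ hH hdet)
  · exact fun w hw ↦ ⟨w.out.1, hout w hw, rfl⟩
  · intro w hw w' hw' hratio
    rw [← Quot.out_eq w, ← Quot.out_eq w']
    exact Quot.sound
      (Grel_of_ratio_eq (hdet Fin.zero_ne_one) (hout w hw 0) (hout w' hw' 0) hratio)

end Graph

/-- For an arbitrary prime power `q` and integer `r ≥ 2`, the graph
`G(q^{r−1}, 1+q+⋯+q^{r−2})` is `K_{r,(r−1)!+1}`-free: any `r` pairwise distinct vertices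
have at most `(r−1)!` common neighbors. -/
theorem G_Kr_free {q r : ℕ} (hq : IsPrimePow q) (hr : 2 ≤ r)
    {F : Type} [Field F] [Fintype F] (hF : Fintype.card F = q ^ (r - 1))
    (H : Subgroup Fˣ) (hH : Nat.card H = ∑ j ∈ Finset.range (r - 1), q ^ j)
    (v : Fin r → GVertex F H) (hv : Function.Injective v) :
    {w : GVertex F H | ∀ i : Fin r, GAdj H w (v i)}.ncard ≤ (r - 1).factorial := by
  obtain ⟨n, rfl⟩ := Nat.exists_eq_add_of_le' hr
  obtain ⟨σ, hσ⟩ := exists_ringHom_eq_pow_pow hq hF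
  refine (Set.encard_le_coe_iff_finite_ncard_le.1 (G_Kr_free_general σ (fun h hh ↦ ?_) v hv)).2
  simp_rw [hσ]
  exact prod_pow_pow_eq_one_of_mem hH hh
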